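/- For every r ≥ 1 there exist pairwise disjoint lines in ℙ³ with ideals P₁,…,P_r and a linear form L ∈ [R]₁ with L ∉ Pᵢ for every i, such that the ideal J = ⋂_{i=1}^r (Pᵢ + (L²)) satisfies dim_K [R/J]_j = min{2r, (j+1)²} for all j ≥ 0. (J is the saturated ideal of the zero-dimensional scheme Z₂ = C ∩ H², where C is the union of the lines and H² is the double plane defined by L²; the conclusion says Z₂ is in generic position on H².) -/

import Mathlib

open MvPolynomial Module

noncomputable section

abbrev Rp (K : Type) [Field K] := MvPolynomial (Fin 4) K

/-!
Let `H` be the plane `x₃ = 0` and let the line with parameters `(a, b, c, d)` be the one through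
`(1 : a : b : 0)` and `(0 : c : d : 1)`. In the chart `x₀ = 1` a form of degree `j` modulo `x₃²` is
a pair `(g, h)` of polynomials in two variables of degrees `≤ j` and `< j`
(`f ≡ g + x₃ h`), so these pairs form a space `formsModSq K j` of dimension `(j + 1)²`
(`finrank_formsModSq`, `map_toPair`). By Taylor expansion such a form lies in `P + (x₃²)` iff

* `g(a, b) = 0`, and
* `c ∂g/∂y (a, b) + d ∂g/∂z (a, b) + h(a, b) = 0`

(`mem_curvilinear_iff`). It remains to see that `2r` such conditions have maximal rank for general
parameters, in every degree.

Add one line at a time. Let `V` be the space of pairs satisfying the conditions so far, and let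
`V₁` be the space of those `h` with `(0, h) ∈ V`. A general new line drops `dim V` by two and
`dim V₁` by one, with truncation at zero (`generic_step`), provided `V₁ = 0` or
`dim V₁ < dim V`:

* if `V₁ ≠ 0`, there are `(g, h') ∈ V` with `g ≠ 0` and `(0, h) ∈ V` with `h ≠ 0`, and the two
  conditions are independent on this pair of elements as soon as `g(a, b) h(a, b) ≠ 0`;
* if `V₁ = 0`, then `V` is determined by its first components. If the two conditions were dependent
  for all parameters, any two first components `f, g` would satisfy `f ∂g = g ∂f` for both
  partial derivatives, which in characteristic zero forces them to be proportional
  (`eq_smul_of_wronskian_eq_zero`), so that `dim V ≤ 1`; then one condition already kills `V`.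

The dimensions `(j + 1)² - 2r` and `max (j (j + 1) / 2 - r, 0)` satisfy the proviso, and each
requirement is a nonempty Zariski-open condition on the parameters, so finitely many degrees
`j ≤ 2r` and the skewness of the lines can be handled simultaneously (`exists_config`). For
`j ≥ 2r` the rank cannot exceed `2r` and is at least the rank in degree `2r`.
-/

section Own

variable {K : Type} [Field K]

/-- The coordinate ring of the chart `x₀ = 1` of the plane `H`. -/
abbrev Pl (K : Type) [Field K] := MvPolynomial (Fin 2) K

/-! ### Vanishing Wronskians in characteristic zero -/

section Wronskian
variable {σ : Type}

lemma eq_C_of_pderiv_eq_zero [CharZero K] (f : MvPolynomial σ K) (h : ∀ i, pderiv i f = 0) :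
    f = C (coeff 0 f) := by
  classical
  ext m
  rw [coeff_C]
  split_ifs with hm
  · rw [hm]
  · obtain ⟨i, hi⟩ : ∃ i, m i ≠ 0 := by
      by_contra! hc
      exact hm (Finsupp.ext fun i => (hc i).symm)
    have h1 := congrArg (coeff (m - Finsupp.single i 1)) (h i)
    rw [coeff_pderiv, tsub_add_cancel_of_le, coeff_zero] at h1
    · rcases mul_eq_zero.1 h1 with h2 | h2
      · exact h2
      · exact absurd h2 (Nat.cast_add_one_ne_zero _)
    · rw [Finsupp.single_le_iff]; omega

/-- A nonzero partial derivative has smaller total degree than `f`. -/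
lemma pderiv_eq_zero_of_dvd (f : MvPolynomial σ K) (i : σ) (h : f ∣ pderiv i f) :
    pderiv i f = 0 := by
  by_contra hne
  obtain ⟨k, hk⟩ := h
  have hf : f ≠ 0 := by rintro rfl; simp at hne
  have hk0 : k ≠ 0 := by rintro rfl; simp [hk] at hne
  have h1 : (pderiv i f).totalDegree = f.totalDegree + k.totalDegree := by
    rw [hk, totalDegree_mul_of_isDomain hf hk0]
  obtain ⟨m, hm, hmd⟩ := Finset.exists_mem_eq_sup (pderiv i f).support
    (support_nonempty.2 hne) (fun s => s.sum fun _ e => e)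
  have h2 : m + Finsupp.single i 1 ∈ f.support := by
    rw [MvPolynomial.mem_support_iff] at hm ⊢
    rw [coeff_pderiv] at hm
    exact left_ne_zero_of_mul hm
  have h3 := le_totalDegree h2
  rw [Finsupp.sum_add_index' (by simp) (by simp)] at h3
  simp only [Finsupp.sum_single_index] at h3
  have h4 : (pderiv i f).totalDegree = m.sum fun _ e => e := hmd
  omega

/-- Cancel the greatest common divisor: for relatively prime `f'`, `g'`, the relation
`f' ∂g' = g' ∂f'` makes each divide its own derivatives, so both are constant. -/
lemma eq_smul_of_wronskian_eq_zero [CharZero K] (f g : MvPolynomial σ K) (hf : f ≠ 0)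
    (h : ∀ i, f * pderiv i g = g * pderiv i f) : ∃ c : K, g = c • f := by
  classical
  obtain ⟨g', f', k, hrel, hg, hf'⟩ := UniqueFactorizationMonoid.exists_reduced_factors' g f hf
  have hk : k ≠ 0 := by rintro rfl; simp at hf'; exact hf hf'.symm
  have hf0 : f' ≠ 0 := by rintro rfl; simp at hf'; exact hf hf'.symm
  have hw : ∀ i, f' * pderiv i g' = g' * pderiv i f' := by
    intro i
    have h1 := h i
    rw [← hg, ← hf', pderiv_mul, pderiv_mul] at h1
    have h2 : k ^ 2 * (f' * pderiv i g' - g' * pderiv i f') = 0 := by linear_combination h1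
    rcases mul_eq_zero.1 h2 with h3 | h3
    · exact absurd h3 (pow_ne_zero _ hk)
    · exact sub_eq_zero.1 h3
  have hfc := eq_C_of_pderiv_eq_zero f' fun i => pderiv_eq_zero_of_dvd f' i
    (hrel.symm.dvd_of_dvd_mul_left ⟨_, (hw i).symm⟩)
  have hgc := eq_C_of_pderiv_eq_zero g' fun i => pderiv_eq_zero_of_dvd g' i
    (hrel.dvd_of_dvd_mul_left ⟨_, hw i⟩)
  have ha : coeff 0 f' ≠ 0 := by
    intro h0; rw [h0, C_0] at hfc; exact hf0 hfc
  refine ⟨coeff 0 g' / coeff 0 f', ?_⟩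
  rw [← hg, ← hf', hgc, hfc, smul_eq_C_mul, coeff_C, coeff_C]
  simp only [if_true]
  rw [mul_left_comm, ← C_mul, div_mul_cancel₀ _ ha]

end Wronskian

/-! ### Dimension counts -/

section LinAlg
variable {V W : Type} [AddCommGroup V] [Module K V] [AddCommGroup W] [Module K W]

lemma finrank_map_add_finrank_inf_ker (T : V →ₗ[K] W) (S : Submodule K V) [FiniteDimensional K S] :
    finrank K (S.map T) + finrank K ↥(S ⊓ LinearMap.ker T) = finrank K S := by
  have h := (T.domRestrict S).finrank_range_add_finrank_ker
  rw [LinearMap.range_domRestrict] at h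
  rw [← h, LinearMap.ker_domRestrict]
  congr 1
  rw [← (Submodule.finrank_map_subtype_eq S _), Submodule.map_comap_subtype]

/-- Two functionals that are independent on `S` cut its dimension by two. -/
lemma finrank_inf_ker_of_det_ne_zero (T : V →ₗ[K] K × K) (S : Submodule K V)
    [FiniteDimensional K S] (f g : V) (hf : f ∈ S) (hg : g ∈ S)
    (h : (T f).1 * (T g).2 - (T g).1 * (T f).2 ≠ 0) :
    finrank K ↥(S ⊓ LinearMap.ker T) = finrank K S - 2 := by
  set d := (T f).1 * (T g).2 - (T g).1 * (T f).2 with hd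
  have h1 : S.map T = ⊤ := by
    rw [eq_top_iff]
    rintro ⟨x, y⟩ -
    -- Cramer's rule
    refine ⟨((x * (T g).2 - (T g).1 * y) / d) • f
      + (((T f).1 * y - x * (T f).2) / d) • g,
      S.add_mem (S.smul_mem _ hf) (S.smul_mem _ hg), ?_⟩
    ext
    · simp; field_simp; rw [hd]; ring
    · simp; field_simp; rw [hd]; ring
  have h2 := finrank_map_add_finrank_inf_ker T S
  rw [h1, finrank_top, finrank_prod, finrank_self] at h2
  omega

lemma finrank_inf_ker_functional (T : V →ₗ[K] K) (S : Submodule K V)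
    [FiniteDimensional K S] (f : V) (hf : f ∈ S) (h : T f ≠ 0) :
    finrank K ↥(S ⊓ LinearMap.ker T) = finrank K S - 1 := by
  have h1 : S.map T = ⊤ := by
    rw [eq_top_iff]
    rintro x -
    exact ⟨(x / T f) • f, S.smul_mem _ hf, by simp [h]⟩
  have h2 := finrank_map_add_finrank_inf_ker T S
  rw [h1, finrank_top, finrank_self] at h2
  omega
end LinAlg

/-! ### General parameters -/

/-- `p` holds for general parameters: on the complement of a hypersurface of affine 4-space. -/
def Generic (p : (Fin 4 → K) → Prop) : Prop :=
  ∃ Q : MvPolynomial (Fin 4) K, Q ≠ 0 ∧ ∀ q, eval q Q ≠ 0 → p q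

lemma Generic.and {p p' : (Fin 4 → K) → Prop} (h : Generic p) (h' : Generic p') :
    Generic fun q => p q ∧ p' q := by
  obtain ⟨Q, h0, h1⟩ := h
  obtain ⟨Q', h0', h1'⟩ := h'
  refine ⟨Q * Q', mul_ne_zero h0 h0', fun q hq => ?_⟩
  rw [map_mul] at hq
  exact ⟨h1 q (left_ne_zero_of_mul hq), h1' q (right_ne_zero_of_mul hq)⟩

lemma Generic.forall {ι : Type} [Fintype ι] {p : ι → (Fin 4 → K) → Prop}
    (h : ∀ i, Generic (p i)) : Generic fun q => ∀ i, p i q := by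
  choose Q h0 h1 using h
  refine ⟨∏ i, Q i, Finset.prod_ne_zero_iff.2 fun i _ => h0 i, fun q hq i => h1 i q ?_⟩
  rw [map_prod] at hq
  exact Finset.prod_ne_zero_iff.1 hq i (Finset.mem_univ i)

lemma Generic.exists [Infinite K] {p : (Fin 4 → K) → Prop} (h : Generic p) : ∃ q, p q := by
  obtain ⟨Q, h0, h1⟩ := h
  by_contra! hc
  refine h0 (MvPolynomial.funext fun q => ?_)
  by_contra hq
  exact hc q (h1 q (by simpa using hq))

/-! ### Forms on the double plane in the affine chart -/

/-- Polynomials of total degree strictly less than `n`. -/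
def degLT (K : Type) [Field K] (n : ℕ) : Submodule K (Pl K) :=
  restrictSupport K {m | m.degree < n}

/-- The two conditions imposed on `(g, h)`, standing for `g + x₃ h`, by the line with parameters
`q = (a, b, c, d)`: the value of `g` at `(a, b)` and the derivative of `g + x₃ h` along the line. -/
def ev (q : Fin 4 → K) : Pl K × Pl K →ₗ[K] K × K :=
  LinearMap.prod
    ((aeval ![q 0, q 1]).toLinearMap ∘ₗ LinearMap.fst K _ _)
    (q 2 • (aeval ![q 0, q 1]).toLinearMap ∘ₗ (pderiv 0).toLinearMap ∘ₗ LinearMap.fst K _ _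
      + q 3 • (aeval ![q 0, q 1]).toLinearMap ∘ₗ (pderiv 1).toLinearMap ∘ₗ LinearMap.fst K _ _
      + (aeval ![q 0, q 1]).toLinearMap ∘ₗ LinearMap.snd K _ _)

lemma ev_fst (q : Fin 4 → K) (F : Pl K × Pl K) : (ev q F).1 = eval ![q 0, q 1] F.1 := by
  simp [ev, aeval_eq_eval]

lemma ev_snd (q : Fin 4 → K) (F : Pl K × Pl K) : (ev q F).2 =
    q 2 * eval ![q 0, q 1] (pderiv 0 F.1) + q 3 * eval ![q 0, q 1] (pderiv 1 F.1)
      + eval ![q 0, q 1] F.2 := by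
  simp [ev, aeval_eq_eval]

/-- Exponents of degree `k < n` correspond to `k` and the exponent of the first variable. -/
def degEquiv (n : ℕ) : {m : Fin 2 →₀ ℕ | m.degree < n} ≃ Σ k : Fin n, Fin (k + 1) where
  toFun m := ⟨⟨m.1.degree, m.2⟩, ⟨m.1 0, by simp [Finsupp.degree_eq_sum]⟩⟩
  invFun x := ⟨Finsupp.equivFunOnFinite.symm ![x.2, x.1 - x.2], by
    have h1 : (x.1 : ℕ) < n := x.1.2
    have h2 : (x.2 : ℕ) < x.1 + 1 := x.2.2
    simp [Finsupp.degree_eq_sum]; omega⟩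
  left_inv := by
    rintro ⟨m, hm⟩
    ext i
    fin_cases i <;> simp [Finsupp.degree_eq_sum]
  right_inv := by
    rintro ⟨⟨x, hx⟩, ⟨y, hy⟩⟩
    have hy' : y < x + 1 := hy
    have h : (Finsupp.equivFunOnFinite.symm ![y, x - y]).degree = x := by
      simp [Finsupp.degree_eq_sum]; omega
    refine Sigma.ext (Fin.ext h) ?_
    rw [Fin.heq_ext_iff (by simpa using h)]
    simp

instance (n : ℕ) : FiniteDimensional K (degLT K n) := by
  have : Finite {m : Fin 2 →₀ ℕ | m.degree < n} := Finite.of_equiv _ (degEquiv n).symm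
  exact Module.Finite.of_basis (basisRestrictSupport K _)

lemma finrank_degLT (n : ℕ) : finrank K (degLT K n) * 2 = n * (n + 1) := by
  have h1 : finrank K (degLT K n) = Nat.card {m : Fin 2 →₀ ℕ | m.degree < n} :=
    finrank_eq_nat_card_basis (basisRestrictSupport K _)
  rw [h1, Nat.card_congr (degEquiv n), Nat.card_eq_fintype_card, Fintype.card_sigma]
  simp only [Fintype.card_fin]
  rw [Finset.sum_range (fun k => k + 1) |>.symm]
  have := Finset.sum_range_id_mul_two (n + 1)
  rw [Finset.sum_range_succ'] at this
  simpa [mul_comm] using this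

/-- The degree-`j` part of `R / (x₃²)`, dehomogenized: the pair `(g, h)` stands for `g + x₃ h`, with
`deg g ≤ j` and `deg h < j`. -/
abbrev formsModSq (K : Type) [Field K] (j : ℕ) : Submodule K (Pl K × Pl K) :=
  (degLT K (j + 1)).prod (degLT K j)

lemma finrank_comap_inr {V W : Type} [AddCommGroup V] [Module K V] [AddCommGroup W] [Module K W]
    (S : Submodule K (V × W)) [FiniteDimensional K S] :
    finrank K (S.map (LinearMap.fst K V W)) + finrank K (S.comap (LinearMap.inr K V W))
      = finrank K S := by
  rw [← finrank_map_add_finrank_inf_ker (LinearMap.fst K V W) S]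
  congr 1
  rw [LinearMap.ker_fst, inf_comm, ← Submodule.map_comap_eq]
  exact (Submodule.equivMapOfInjective _ LinearMap.inr_injective _).finrank_eq

instance (j : ℕ) : FiniteDimensional K (formsModSq K j) :=
  Module.Finite.of_surjective
    (((degLT K (j + 1)).subtype.prodMap (degLT K j).subtype).codRestrict (formsModSq K j)
      (fun x => ⟨x.1.2, x.2.2⟩))
    (fun x => ⟨(⟨x.1.1, x.2.1⟩, ⟨x.1.2, x.2.2⟩), rfl⟩)

lemma finrank_formsModSq (j : ℕ) : finrank K (formsModSq K j) = (j + 1) ^ 2 := by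
  rw [← finrank_comap_inr]
  have h1 : (formsModSq K j).map (LinearMap.fst K _ _) = degLT K (j + 1) := Submodule.prod_map_fst _ _
  have h2 : (formsModSq K j).comap (LinearMap.inr K _ _) = degLT K j := Submodule.prod_comap_inr _ _
  rw [h1, h2]
  have h3 := finrank_degLT (K := K) (j + 1)
  have h4 := finrank_degLT (K := K) j
  nlinarith

lemma exists_ne_zero_of_finrank {V : Type} [AddCommGroup V] [Module K V] (S : Submodule K V)
    (h : finrank K S ≠ 0) : ∃ f ∈ S, f ≠ 0 := by
  apply Submodule.exists_mem_ne_zero_of_ne_bot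
  rintro rfl
  simp at h

/-- On a pair `(0, h)` the two conditions amount to the vanishing of `h` at `(a, b)`. -/
lemma comap_inr_inf_ker (V : Submodule K (Pl K × Pl K)) (q : Fin 4 → K) :
    (V ⊓ LinearMap.ker (ev q)).comap (LinearMap.inr K _ _) =
      V.comap (LinearMap.inr K _ _) ⊓ LinearMap.ker (aeval ![q 0, q 1]).toLinearMap := by
  ext h
  simp [Prod.ext_iff, ev_fst, ev_snd, aeval_eq_eval]

/-- A polynomial in `a, b`, regarded as a polynomial in the parameters `a, b, c, d`. -/
def pull (f : Pl K) : MvPolynomial (Fin 4) K := rename ![0, 1] f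

lemma eval_pull (f : Pl K) (q : Fin 4 → K) : eval q (pull f) = eval ![q 0, q 1] f := by
  rw [pull, eval_rename]
  congr 1
  congr 1
  ext i
  fin_cases i <;> rfl

lemma pull_ne_zero {f : Pl K} (hf : f ≠ 0) : pull f ≠ 0 := by
  have hi : Function.Injective (![0, 1] : Fin 2 → Fin 4) := by decide
  exact fun h => hf ((map_eq_zero_iff _ (rename_injective _ hi)).1 h)

/-! ### Adding one general line -/

/-- A general line imposes as many conditions as possible on `V` and on the subspace of pairs
`(0, h)` in `V`. The hypothesis excludes a nonzero `V` all of whose first components vanish, on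
which a line imposes only one condition. -/
lemma generic_step [CharZero K] (V : Submodule K (Pl K × Pl K)) [FiniteDimensional K V]
    (h : finrank K (V.comap (LinearMap.inr K _ _)) = 0 ∨
      finrank K (V.comap (LinearMap.inr K _ _)) < finrank K V) :
    Generic fun q => finrank K ↥(V ⊓ LinearMap.ker (ev q)) = finrank K V - 2 ∧
      finrank K ((V ⊓ LinearMap.ker (ev q)).comap (LinearMap.inr K _ _)) =
        finrank K (V.comap (LinearMap.inr K _ _)) - 1 := by
  have hfin : FiniteDimensional K (V.comap (LinearMap.inr K (Pl K) (Pl K))) :=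
    Module.Finite.of_injective
      ((LinearMap.inr K (Pl K) (Pl K)).restrict (p := V.comap (LinearMap.inr K _ _)) (q := V)
        (fun x hx => hx))
      (fun x y hxy => Subtype.ext (LinearMap.inr_injective (congrArg Subtype.val hxy)))
  by_cases h1 : finrank K (V.comap (LinearMap.inr K (Pl K) (Pl K))) = 0
  · have hV1 : ∀ F ∈ V, F.1 = 0 → F = 0 := by
      rintro ⟨a, b⟩ hF (rfl : a = 0)
      rw [Submodule.finrank_eq_zero] at h1
      have : b ∈ V.comap (LinearMap.inr K (Pl K) (Pl K)) := hF
      rw [h1] at this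
      simpa using this
    have h2 : ∀ q : Fin 4 → K,
        finrank K ((V ⊓ LinearMap.ker (ev q)).comap (LinearMap.inr K _ _)) =
        finrank K (V.comap (LinearMap.inr K (Pl K) (Pl K))) - 1 := by
      intro q
      rw [comap_inr_inf_ker, h1, Submodule.finrank_eq_zero, Submodule.finrank_eq_zero.1 h1,
        bot_inf_eq]
    by_cases h3 : finrank K V = 0
    · refine ⟨1, one_ne_zero, fun q _ => ⟨?_, h2 q⟩⟩
      rw [h3, Submodule.finrank_eq_zero, Submodule.finrank_eq_zero.1 h3, bot_inf_eq]
    obtain ⟨F, hF, hF0⟩ := exists_ne_zero_of_finrank V h3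
    have hF1 : F.1 ≠ 0 := fun hc => hF0 (hV1 F hF hc)
    by_cases h4 : ∀ H ∈ V, ∃ c : K, c • F = H
    · refine ⟨pull F.1, pull_ne_zero hF1, fun q hq => ⟨?_, h2 q⟩⟩
      have h5 : finrank K V ≤ 1 := finrank_le_one (⟨F, hF⟩ : V) fun w => by
        obtain ⟨c, hc⟩ := h4 w w.2
        exact ⟨c, Subtype.ext hc⟩
      rw [Nat.sub_eq_zero_of_le (by omega), Submodule.finrank_eq_zero, eq_bot_iff]
      rintro H ⟨hH, hH'⟩
      obtain ⟨c, rfl⟩ := h4 H hH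
      rw [eval_pull] at hq
      have h6 : (ev q (c • F)).1 = 0 := by rw [LinearMap.mem_ker.1 hH']; rfl
      rw [ev_fst, Prod.smul_fst, smul_eval] at h6
      have : c = 0 := (mul_eq_zero.1 h6).resolve_right hq
      simp [this]
    · push Not at h4
      obtain ⟨H, hH, hFH⟩ := h4
      obtain ⟨i, hi⟩ : ∃ i, F.1 * pderiv i H.1 ≠ H.1 * pderiv i F.1 := by
        by_contra! hc
        obtain ⟨c, hc⟩ := eq_smul_of_wronskian_eq_zero F.1 H.1 hF1 hc
        apply hFH c
        have := hV1 (c • F - H) (V.sub_mem (V.smul_mem c hF) hH) (by simp [hc])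
        exact sub_eq_zero.1 this
      -- `Q` is the determinant of the two conditions on `F`, `H`; it is affine in `c` and `d`, with
      -- the Wronskians `W 0`, `W 1` as coefficients.
      let W : Fin 2 → Pl K := fun i => F.1 * pderiv i H.1 - H.1 * pderiv i F.1
      let Q : MvPolynomial (Fin 4) K :=
        X 2 * pull (W 0) + X 3 * pull (W 1) + pull (F.1 * H.2 - H.1 * F.2)
      have hQ : ∀ q, eval q Q = (ev q F).1 * (ev q H).2 - (ev q H).1 * (ev q F).2 := by
        intro q
        simp only [Q, W, map_add, map_mul, map_sub, eval_X, eval_pull, ev_fst, ev_snd]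
        ring
      refine ⟨Q, fun hQ0 => ?_, fun q hq => ⟨?_, h2 q⟩⟩
      · have h6 : ∀ a b c d : K, c * eval ![a, b] (W 0) + d * eval ![a, b] (W 1) +
            eval ![a, b] (F.1 * H.2 - H.1 * F.2) = 0 := by
          intro a b c d
          have := congrArg (eval ![a, b, c, d]) hQ0
          simp only [Q, map_add, map_mul, eval_X, eval_pull, map_zero] at this
          exact this
        have h7 : W i = 0 := by
          refine MvPolynomial.funext fun x => ?_
          have hx : x = ![x 0, x 1] := by ext i; fin_cases i <;> rfl
          have e0 := h6 (x 0) (x 1) 0 0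
          have e1 := h6 (x 0) (x 1) 1 0
          have e2 := h6 (x 0) (x 1) 0 1
          rw [hx, map_zero]
          fin_cases i
          · simp only [Fin.zero_eta]
            linear_combination e1 - e0
          · simp only [Fin.mk_one]
            linear_combination e2 - e0
        exact hi (sub_eq_zero.1 h7)
      · rw [hQ] at hq
        exact finrank_inf_ker_of_det_ne_zero (ev q) V F H hF hH hq
  · have h2 := h.resolve_left h1
    have h3 := finrank_comap_inr V
    obtain ⟨g, hg, hg0⟩ := exists_ne_zero_of_finrank _ h1
    obtain ⟨f, ⟨F, hF, rfl⟩, hf0⟩ :=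
      exists_ne_zero_of_finrank (V.map (LinearMap.fst K _ _)) (by omega)
    refine ⟨pull F.1 * pull g, mul_ne_zero (pull_ne_zero hf0) (pull_ne_zero hg0),
      fun q hq => ⟨?_, ?_⟩⟩
    · rw [map_mul, eval_pull, eval_pull] at hq
      refine finrank_inf_ker_of_det_ne_zero (ev q) V F (0, g) hF hg ?_
      simpa [ev_fst, ev_snd] using hq
    · rw [comap_inr_inf_ker]
      rw [map_mul, eval_pull, eval_pull] at hq
      refine finrank_inf_ker_functional _ _ g hg ?_
      simpa [aeval_eq_eval] using right_ne_zero_of_mul hq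

/-- The conditions imposed by all the lines together. -/
def evs {r : ℕ} (q : Fin r → Fin 4 → K) : Pl K × Pl K →ₗ[K] (Fin r → K × K) :=
  LinearMap.pi fun i => ev (q i)

/-- Up to sign the determinant of the four linear forms of two lines; nonzero iff these are skew. -/
def skewDet (q q' : Fin 4 → K) : K :=
  (q 0 - q' 0) * (q 3 - q' 3) - (q 1 - q' 1) * (q 2 - q' 2)

lemma generic_skew (q' : Fin 4 → K) : Generic fun q => skewDet q q' ≠ 0 := by
  refine ⟨(X 0 - C (q' 0)) * (X 3 - C (q' 3)) - (X 1 - C (q' 1)) * (X 2 - C (q' 2)),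
    fun h => ?_, fun q hq => by simpa [skewDet] using hq⟩
  have := congrArg (eval ![q' 0 + 1, q' 1, q' 2, q' 3 + 1]) h
  simp at this

/-- A single choice of pairwise skew lines of maximal rank in all degrees `j ≤ N`. -/
lemma exists_config [CharZero K] (N r : ℕ) : ∃ q : Fin r → Fin 4 → K,
    (∀ i k, i ≠ k → skewDet (q i) (q k) ≠ 0) ∧
    ∀ j : Fin (N + 1),
      finrank K ↥(formsModSq K j ⊓ LinearMap.ker (evs q)) = (j + 1) ^ 2 - 2 * r ∧
      finrank K ((formsModSq K j ⊓ LinearMap.ker (evs q)).comap (LinearMap.inr K _ _)) =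
        finrank K (degLT K j) - r := by
  induction r with
  | zero =>
    refine ⟨Fin.elim0, fun i => i.elim0, fun j => ?_⟩
    have h : LinearMap.ker (evs (K := K) Fin.elim0) = ⊤ := by
      rw [eq_top_iff]
      exact fun x _ => funext fun i => i.elim0
    have h2 : (formsModSq K j).comap (LinearMap.inr K _ _) = degLT K j := Submodule.prod_comap_inr _ _
    rw [h, inf_top_eq, finrank_formsModSq, h2]
    simp
  | succ r ih =>
    obtain ⟨q, hq, hd⟩ := ih
    have hfin : ∀ j : Fin (N + 1), FiniteDimensional K ↥(formsModSq K j ⊓ LinearMap.ker (evs q)) :=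
      fun j => Submodule.finiteDimensional_of_le inf_le_left
    obtain ⟨p, hp, hs⟩ := ((Generic.forall fun j : Fin (N + 1) =>
      generic_step (formsModSq K j ⊓ LinearMap.ker (evs q)) (by
        rw [(hd j).1, (hd j).2]
        have h3 := finrank_degLT (K := K) j
        have h4 : ((j : ℕ) + 1) ^ 2 = j * (j + 1) + j + 1 := by ring
        rw [h4, ← h3]
        omega)).and (Generic.forall fun i => generic_skew (q i))).exists
    have hker : LinearMap.ker (evs (Fin.cons p q : Fin (r + 1) → Fin 4 → K)) =
        LinearMap.ker (evs q) ⊓ LinearMap.ker (ev p) := by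
      ext F
      simp only [evs, LinearMap.mem_ker, Submodule.mem_inf, funext_iff, LinearMap.pi_apply,
        Fin.forall_fin_succ, Fin.cons_zero, Fin.cons_succ, Pi.zero_apply]
      exact and_comm
    refine ⟨Fin.cons p q, fun i k => ?_, fun j => ?_⟩
    · refine Fin.cases ?_ (fun i => ?_) i <;> refine Fin.cases ?_ (fun k => ?_) k
      · simp
      · intro _
        simpa using hs k
      · intro _
        have := hs i
        simp only [Fin.cons_zero, Fin.cons_succ]
        intro h
        apply this
        rw [← h]
        simp only [skewDet]
        ring
      · intro h
        simpa using hq i k (fun h' => h (by rw [h']))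
    · rw [hker, ← inf_assoc, (hp j).1, (hp j).2, (hd j).1, (hd j).2]
      omega

/-- Maximal rank in every degree at once. -/
lemma finrank_map_evs [CharZero K] (r : ℕ) : ∃ q : Fin r → Fin 4 → K,
    (∀ i k, i ≠ k → skewDet (q i) (q k) ≠ 0) ∧
    ∀ j : ℕ, finrank K ((formsModSq K j).map (evs q)) = min (2 * r) ((j + 1) ^ 2) := by
  obtain ⟨q, hq, hd⟩ := exists_config (K := K) (2 * r) r
  have key : ∀ j ≤ 2 * r, finrank K ((formsModSq K j).map (evs q)) = min (2 * r) ((j + 1) ^ 2) := by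
    intro j hj
    have h1 := finrank_map_add_finrank_inf_ker (evs q) (formsModSq K j)
    have h2 := (hd ⟨j, by omega⟩).1
    simp only at h2
    rw [finrank_formsModSq, h2] at h1
    omega
  refine ⟨q, hq, fun j => ?_⟩
  rcases le_total j (2 * r) with hj | hj
  · exact key j hj
  have h1 : (formsModSq K (2 * r)).map (evs q) ≤ (formsModSq K j).map (evs q) := by
    refine Submodule.map_mono (Submodule.prod_mono ?_ ?_) <;>
    · refine restrictSupport_mono _ fun m hm => ?_
      simp only [Set.mem_ofPred_eq] at hm ⊢
      omega
  have h2 := Submodule.finrank_mono h1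
  have h3 := Submodule.finrank_le ((formsModSq K j).map (evs q))
  rw [finrank_pi_fintype] at h3
  simp only [finrank_prod, finrank_self, Finset.sum_const, Finset.card_univ, Fintype.card_fin,
    smul_eq_mul] at h3
  rw [key _ le_rfl] at h2
  have h4 : 2 * r ≤ (2 * r + 1) ^ 2 := by nlinarith
  have h5 : (2 * r + 1) ^ 2 ≤ (j + 1) ^ 2 := Nat.pow_le_pow_left (by omega) 2
  omega

/-! ### The ideal of a curvilinear scheme -/

section Taylor
variable {σ S : Type} [Fintype σ] [CommRing S] [Algebra K S]

/-- Taylor expansion along an element of square zero. -/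
lemma aeval_add_mul (s : S) (hs : s * s = 0) (p u : σ → S) (f : MvPolynomial σ K) :
    aeval (fun i => p i + s * u i) f = aeval p f + s * ∑ i, u i * aeval p (pderiv i f) := by
  classical
  induction f using MvPolynomial.induction_on with
  | C a => simp
  | add f g hf hg =>
    simp only [map_add, hf, hg, mul_add, Finset.sum_add_distrib]
    ring
  | mul_X f k hf =>
    have h : ∑ i, u i * aeval p (pderiv i (f * X k)) =
        (∑ i, u i * aeval p (pderiv i f)) * p k + u k * aeval p f := by
      simp only [pderiv_mul, pderiv_X, map_add, map_mul, aeval_X, mul_add, Finset.sum_add_distrib,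
        Finset.sum_mul]
      congr 1
      · exact Finset.sum_congr rfl fun i _ => by ring
      · rw [Finset.sum_eq_single k]
        · simp
        · intro i _ hi
          rw [Pi.single_eq_of_ne (Ne.symm hi)]
          simp
        · simp
    rw [map_mul, map_mul, hf, h, aeval_X, aeval_X]
    linear_combination (u k * ∑ i, u i * aeval p (pderiv i f)) * hs

lemma aeval_mul_algebraMap (t : S) (p : σ → K) (f : MvPolynomial σ K) (n : ℕ)
    (hf : f.IsHomogeneous n) :
    aeval (fun i => t * algebraMap K S (p i)) f = t ^ n * algebraMap K S (eval p f) := by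
  rw [aeval_def, eval₂_eq', eval_eq', map_sum, Finset.mul_sum]
  refine Finset.sum_congr rfl fun d hd => ?_
  have h1 : ∑ i, d i = n := by
    by_contra h
    exact MvPolynomial.mem_support_iff.1 hd
      (hf.coeff_eq_zero (by rwa [Finsupp.degree_eq_sum]))
  simp only [mul_pow, Finset.prod_mul_distrib, Finset.prod_pow_eq_pow_sum, h1, map_mul, map_prod,
    map_pow]
  ring
end Taylor

/-- The point where the line with parameters `q` meets the plane `x₃ = 0`. -/
def pt (q : Fin 4 → K) : Fin 4 → K := ![1, q 0, q 1, 0]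

/-- A second point of the line, with `x₃ = 1`. -/
def dir (q : Fin 4 → K) : Fin 4 → K := ![0, q 2, q 3, 1]

/-- The first linear form cutting out the line through `pt q` and `dir q`. -/
def line (q : Fin 4 → K) : Rp K := X 1 - C (q 0) * X 0 - C (q 2) * X 3

/-- The second linear form cutting out the line through `pt q` and `dir q`. -/
def line' (q : Fin 4 → K) : Rp K := X 2 - C (q 1) * X 0 - C (q 3) * X 3

/-- A form lies in `P + (x₃²)` iff its value at `pt q` and its derivative there along the line both
vanish. -/
lemma mem_curvilinear_iff (q : Fin 4 → K) (f : Rp K) (n : ℕ) (hf : f.IsHomogeneous n) :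
    f ∈ Ideal.span {line q, line' q} ⊔ Ideal.span {(X 3 : Rp K) ^ 2} ↔
      eval (pt q) f = 0 ∧ ∑ i, dir q i * eval (pt q) (pderiv i f) = 0 := by
  constructor
  · intro h
    -- The tangent vector `pt q + ε dir q` kills the ideal.
    let φ : Rp K →ₐ[K] DualNumber K :=
      aeval fun i => algebraMap K _ (pt q i) + DualNumber.eps * algebraMap K _ (dir q i)
    have hI : Ideal.span {line q, line' q} ⊔ Ideal.span {(X 3 : Rp K) ^ 2} ≤ RingHom.ker φ := by
      rw [sup_le_iff, Ideal.span_le, Ideal.span_le, Set.pair_subset_iff, Set.singleton_subset_iff]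
      refine ⟨⟨?_, ?_⟩, ?_⟩ <;> rw [SetLike.mem_coe, RingHom.mem_ker]
      · simp [φ, line, pt, dir, algHom_C]
        ring
      · simp [φ, line', pt, dir, algHom_C]
        ring
      · simp [φ, pt, dir]
    have h1 : φ f = 0 := hI h
    have h2 := aeval_add_mul (K := K) (DualNumber.eps : DualNumber K) DualNumber.eps_mul_eps
      (fun i => algebraMap K _ (pt q i)) (fun i => algebraMap K _ (dir q i)) f
    have h3 : ∀ g : Rp K, aeval (fun i => algebraMap K (DualNumber K) (pt q i)) g =
        algebraMap K _ (eval (pt q) g) := fun g => by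
      rw [← aeval_eq_eval]; exact aeval_algebraMap_apply _ _ _
    simp only [h3, ← map_mul, ← map_sum] at h2
    have h4 := h1.symm.trans h2
    exact ⟨by simpa [TrivSqZeroExt.algebraMap_eq_inl, -map_sum] using
        (congrArg TrivSqZeroExt.fst h4).symm,
      by simpa [TrivSqZeroExt.algebraMap_eq_inl, -map_sum] using
        (congrArg TrivSqZeroExt.snd h4).symm⟩
  · rintro ⟨h0, h1⟩
    -- Modulo the ideal, the coordinates are `x₀ • pt q + x₃ • dir q` with `x₃² = 0`.
    set I := Ideal.span {line q, line' q} ⊔ Ideal.span {(X 3 : Rp K) ^ 2} with hI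
    let π : Rp K →ₐ[K] Rp K ⧸ I := Ideal.Quotient.mkₐ K I
    have hX : ∀ i, π (X i) = π (X 0) * algebraMap K _ (pt q i) +
        π (X 3) * algebraMap K _ (dir q i) := by
      have hl : π (line q) = 0 := Ideal.Quotient.eq_zero_iff_mem.2
        (Ideal.mem_sup_left (Ideal.subset_span (by simp)))
      have hl' : π (line' q) = 0 := Ideal.Quotient.eq_zero_iff_mem.2
        (Ideal.mem_sup_left (Ideal.subset_span (by simp)))
      simp only [line, line', map_sub, map_mul, algHom_C] at hl hl'
      intro i
      fin_cases i
      · simp [pt, dir]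
      · simp [pt, dir]
        linear_combination hl
      · simp [pt, dir]
        linear_combination hl'
      · simp [pt, dir]
    have hs : π (X 3) * π (X 3) = 0 := by
      rw [← map_mul, ← pow_two]
      exact Ideal.Quotient.eq_zero_iff_mem.2
        (Ideal.mem_sup_right (Ideal.subset_span (by simp)))
    have h2 : π f = aeval (fun i => π (X i)) f := by
      rw [← comp_aeval_apply, aeval_X_left_apply]
    refine Ideal.Quotient.eq_zero_iff_mem.1 (?_ : π f = 0)
    rw [h2]
    rw [show (fun i => π (X i)) = _ from funext hX, aeval_add_mul _ hs, aeval_mul_algebraMap _ _ _ n hf, h0]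
    simp_rw [aeval_mul_algebraMap _ _ _ (n - 1) hf.pderiv]
    have h3 : ∑ i, algebraMap K (Rp K ⧸ I) (dir q i) *
        (π (X 0) ^ (n - 1) * algebraMap K (Rp K ⧸ I) (eval (pt q) (pderiv i f))) =
        π (X 0) ^ (n - 1) * algebraMap K (Rp K ⧸ I)
          (∑ i, dir q i * eval (pt q) (pderiv i f)) := by
      rw [map_sum, Finset.mul_sum]
      refine Finset.sum_congr rfl fun i _ => ?_
      rw [map_mul]; ring
    rw [h3, h1]
    simp

/-! ### Dehomogenization -/

/-- Restriction to the plane `x₃ = 0` and to the chart `x₀ = 1`. -/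
def dehom : Rp K →ₐ[K] Pl K := aeval ![1, X 0, X 1, 0]

/-- Dehomogenization modulo `x₃²`: the form `f ≡ g + x₃ h` is sent to `(g, h)`. -/
def toPair : Rp K →ₗ[K] Pl K × Pl K :=
  LinearMap.prod dehom.toLinearMap (dehom.toLinearMap ∘ₗ (pderiv 3).toLinearMap)

lemma toPair_apply (f : Rp K) : toPair f = (dehom f, dehom (pderiv 3 f)) := rfl

lemma eval_dehom (q : Fin 4 → K) (f : Rp K) : eval ![q 0, q 1] (dehom f) = eval (pt q) f := by
  rw [← aeval_eq_eval, ← aeval_eq_eval]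
  change ((aeval ![q 0, q 1]).comp dehom) f = _
  congr 1
  apply MvPolynomial.algHom_ext
  intro i
  fin_cases i <;> simp [dehom, pt]

lemma pderiv_dehom (f : Rp K) : pderiv 0 (dehom f) = dehom (pderiv 1 f) ∧
    pderiv 1 (dehom f) = dehom (pderiv 2 f) := by
  induction f using MvPolynomial.induction_on with
  | C a => simp [dehom, algHom_C]
  | add f g hf hg => simp [hf.1, hf.2, hg.1, hg.2]
  | mul_X f k hf =>
    rw [map_mul, pderiv_mul, pderiv_mul, pderiv_mul, pderiv_mul, hf.1, hf.2]
    fin_cases k <;> simp [dehom, pderiv_X]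

lemma ev_toPair (q : Fin 4 → K) (f : Rp K) :
    ev q (toPair f) = (eval (pt q) f, ∑ i, dir q i * eval (pt q) (pderiv i f)) := by
  ext
  · rw [ev_fst, toPair_apply, eval_dehom]
  · rw [ev_snd, toPair_apply]
    simp only [(pderiv_dehom f).1, (pderiv_dehom f).2, eval_dehom, Fin.sum_univ_four]
    simp [dir]

lemma dehom_monomial (m : Fin 4 →₀ ℕ) (a : K) : dehom (monomial m a) =
    C a * (X 0 ^ m 1 * X 1 ^ m 2 * 0 ^ m 3) := by
  rw [dehom, aeval_monomial, Finsupp.prod_fintype _ _ (by simp)]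
  simp [Fin.prod_univ_four]

lemma X_pow_mul_X_pow_mem (n i k : ℕ) (h : i + k < n) : (X 0 ^ i * X 1 ^ k : Pl K) ∈ degLT K n := by
  have : (X 0 ^ i * X 1 ^ k : Pl K) = monomial (Finsupp.single 0 i + Finsupp.single 1 k) 1 := by
    simp [X_pow_eq_monomial]
  rw [this, degLT, monomial_mem_restrictSupport]
  left
  simpa [map_add, Finsupp.degree_single] using h

lemma map_toPair (j : ℕ) : (homogeneousSubmodule (Fin 4) K j).map toPair = formsModSq K j := by
  apply le_antisymm
  · have h : homogeneousSubmodule (Fin 4) K j = restrictSupport K {d | d.degree = j} :=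
      homogeneousSubmodule_eq_finsupp_supported (Fin 4) K j
    rw [h, restrictSupport_eq_span, Submodule.map_span, Submodule.span_le]
    rintro _ ⟨_, ⟨m, hm, rfl⟩, rfl⟩
    have hm' : m 0 + m 1 + m 2 + m 3 = j := by
      rw [← hm, Finsupp.degree_eq_sum, Fin.sum_univ_four]
    rw [SetLike.mem_coe, toPair_apply, pderiv_monomial, dehom_monomial, dehom_monomial]
    refine ⟨?_, ?_⟩
    · simp only [C_1, one_mul]
      rcases Nat.eq_zero_or_pos (m 3) with h3 | h3
      · rw [h3, pow_zero, mul_one]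
        exact X_pow_mul_X_pow_mem _ _ _ (by omega)
      · rw [zero_pow (by omega), mul_zero]
        exact Submodule.zero_mem _
    · have e : (m - Finsupp.single 3 1 : Fin 4 →₀ ℕ) 3 = m 3 - 1 := by simp
      simp only [one_mul, ← smul_eq_C_mul]
      rcases (by omega : m 3 = 0 ∨ 2 ≤ m 3 ∨ m 3 = 1) with h3 | h3 | h3
      · simp [h3]
      · rw [e, zero_pow (by omega), mul_zero, smul_zero]
        exact Submodule.zero_mem _
      · refine Submodule.smul_mem _ _ ?_
        have e1 : (m - Finsupp.single 3 1 : Fin 4 →₀ ℕ) 1 = m 1 := by simp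
        have e2 : (m - Finsupp.single 3 1 : Fin 4 →₀ ℕ) 2 = m 2 := by simp
        have e3 : (m - Finsupp.single 3 1 : Fin 4 →₀ ℕ) 3 = 0 := by omega
        rw [e1, e2, e3, pow_zero, mul_one]
        exact X_pow_mul_X_pow_mem _ _ _ (by omega)
  · have hle : ∀ n (T : Submodule K (Pl K)),
        (∀ i k, i + k < n → (X 0 ^ i * X 1 ^ k : Pl K) ∈ T) → degLT K n ≤ T := by
      intro n T hT
      rw [degLT, restrictSupport_eq_span, Submodule.span_le]
      rintro _ ⟨m, hm, rfl⟩
      have h2 : monomial m (1 : K) = X 0 ^ m 0 * X 1 ^ m 1 := by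
        rw [monomial_eq, Finsupp.prod_fintype _ _ (by simp), Fin.prod_univ_two]
        simp
      simp only [h2]
      refine hT _ _ ?_
      simpa [Finsupp.degree_eq_sum] using hm
    have h1 : degLT K (j + 1) ≤
        ((homogeneousSubmodule (Fin 4) K j).map toPair).comap (LinearMap.inl K _ _) := by
      refine hle _ _ fun i k hik => ⟨X 0 ^ (j - i - k) * X 1 ^ i * X 2 ^ k, ?_, ?_⟩
      · have := ((isHomogeneous_X_pow (R := K) (0 : Fin 4) (j - i - k)).mul
          (isHomogeneous_X_pow 1 i)).mul (isHomogeneous_X_pow 2 k)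
        rwa [show j - i - k + i + k = j by omega] at this
      · simp [toPair_apply, dehom, pderiv_X]
    have h2 : degLT K j ≤
        ((homogeneousSubmodule (Fin 4) K j).map toPair).comap (LinearMap.inr K _ _) := by
      refine hle _ _ fun i k hik => ⟨X 0 ^ (j - 1 - i - k) * X 1 ^ i * X 2 ^ k * X 3, ?_, ?_⟩
      · have := (((isHomogeneous_X_pow (R := K) (0 : Fin 4) (j - 1 - i - k)).mul
          (isHomogeneous_X_pow 1 i)).mul (isHomogeneous_X_pow 2 k)).mul (isHomogeneous_X K 3)
        rwa [show j - 1 - i - k + i + k + 1 = j by omega] at this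
      · simp [toPair_apply, dehom, pderiv_X]
    rintro ⟨g, h⟩ ⟨hg, hh⟩
    have h3 := Submodule.add_mem _ (Submodule.mem_comap.1 (h1 hg)) (Submodule.mem_comap.1 (h2 hh))
    rwa [LinearMap.inl_apply, LinearMap.inr_apply, Prod.mk_add_mk, add_zero, zero_add] at h3

lemma line_mem (q : Fin 4 → K) : line q ∈ homogeneousSubmodule (Fin 4) K 1 :=
  Submodule.sub_mem _ (Submodule.sub_mem _ (isHomogeneous_X K 1) (isHomogeneous_C_mul_X _ _))
    (isHomogeneous_C_mul_X _ _)

lemma line'_mem (q : Fin 4 → K) : line' q ∈ homogeneousSubmodule (Fin 4) K 1 :=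
  Submodule.sub_mem _ (Submodule.sub_mem _ (isHomogeneous_X K 2) (isHomogeneous_C_mul_X _ _))
    (isHomogeneous_C_mul_X _ _)

/-! ### The lines -/

lemma span_lines_of_skew (q q' : Fin 4 → K) (h : skewDet q q' ≠ 0) :
    Submodule.span K {line q, line' q, line q', line' q'} = homogeneousSubmodule (Fin 4) K 1 := by
  apply le_antisymm
  · rw [Submodule.span_le]
    rintro x (rfl | rfl | rfl | rfl)
    exacts [line_mem q, line'_mem q, line_mem q', line'_mem q']
  set S := Submodule.span K {line q, line' q, line q', line' q'} with hS
  have m1 : line q ∈ S := Submodule.subset_span (by simp)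
  have m2 : line' q ∈ S := Submodule.subset_span (by simp)
  have m3 : line q' ∈ S := Submodule.subset_span (by simp)
  have m4 : line' q' ∈ S := Submodule.subset_span (by simp)
  have hinv : (C (skewDet q q')⁻¹ * C (skewDet q q') : Rp K) = 1 := by
    rw [← C_mul, inv_mul_cancel₀ h, C_1]
  have hdet : (C (skewDet q q') : Rp K) = (C (q 0) - C (q' 0)) * (C (q 3) - C (q' 3)) -
      (C (q 1) - C (q' 1)) * (C (q 2) - C (q' 2)) := by simp [skewDet]
  have x0 : (X 0 : Rp K) ∈ S := by
    have : (X 0 : Rp K) = (-(skewDet q q')⁻¹) •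
        ((q 3 - q' 3) • (line q - line q') - (q 2 - q' 2) • (line' q - line' q')) := by
      simp only [smul_eq_C_mul, line, line', C_neg, C_sub]
      linear_combination (-X 0) * hinv + (X 0 * C (skewDet q q')⁻¹) * hdet
    rw [this]
    exact S.smul_mem _ (S.sub_mem (S.smul_mem _ (S.sub_mem m1 m3)) (S.smul_mem _ (S.sub_mem m2 m4)))
  have x3 : (X 3 : Rp K) ∈ S := by
    have : (X 3 : Rp K) = ((skewDet q q')⁻¹) •
        ((q 1 - q' 1) • (line q - line q') - (q 0 - q' 0) • (line' q - line' q')) := by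
      simp only [smul_eq_C_mul, line, line', C_sub]
      linear_combination (-X 3) * hinv + (X 3 * C (skewDet q q')⁻¹) * hdet
    rw [this]
    exact S.smul_mem _ (S.sub_mem (S.smul_mem _ (S.sub_mem m1 m3)) (S.smul_mem _ (S.sub_mem m2 m4)))
  have x1 : (X 1 : Rp K) ∈ S := by
    have : (X 1 : Rp K) = line q + q 0 • X 0 + q 2 • X 3 := by
      simp only [smul_eq_C_mul, line]; ring
    rw [this]
    exact S.add_mem (S.add_mem m1 (S.smul_mem _ x0)) (S.smul_mem _ x3)
  have x2 : (X 2 : Rp K) ∈ S := by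
    have : (X 2 : Rp K) = line' q + q 1 • X 0 + q 3 • X 3 := by
      simp only [smul_eq_C_mul, line']; ring
    rw [this]
    exact S.add_mem (S.add_mem m2 (S.smul_mem _ x0)) (S.smul_mem _ x3)
  rw [homogeneousSubmodule_one_eq_span_X, Submodule.span_le]
  rintro _ ⟨i, rfl⟩
  fin_cases i
  exacts [x0, x1, x2, x3]

lemma linearIndependent_line (q : Fin 4 → K) : LinearIndependent K ![line q, line' q] := by
  rw [LinearIndependent.pair_iff]
  intro s t h
  have h1 := congrArg (eval ![0, 1, 0, 0]) h
  have h2 := congrArg (eval ![0, 0, 1, 0]) h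
  simp [line, line', smul_eval] at h1 h2
  exact ⟨h1, h2⟩

lemma X_three_notMem (q : Fin 4 → K) : (X 3 : Rp K) ∉ Ideal.span {line q, line' q} := by
  have hI : Ideal.span {line q, line' q} ≤ RingHom.ker (eval (dir q)) := by
    rw [Ideal.span_le, Set.pair_subset_iff]
    constructor <;> rw [SetLike.mem_coe, RingHom.mem_ker]
    · simp [line, dir]
    · simp [line', dir]
  intro h
  have := hI h
  rw [RingHom.mem_ker] at this
  simp [dir] at this

/-- The degree-`j` part of `J` is cut out by the conditions of all the lines. -/
lemma inf_eq_inf_ker {r : ℕ} (q : Fin r → Fin 4 → K) (j : ℕ) :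
    homogeneousSubmodule (Fin 4) K j ⊓ Submodule.restrictScalars K
      ((⨅ i, (Ideal.span {line (q i), line' (q i)} ⊔ Ideal.span {X 3 ^ 2}) : Ideal (Rp K))) =
    homogeneousSubmodule (Fin 4) K j ⊓ LinearMap.ker (evs q ∘ₗ toPair) := by
  ext f
  simp only [Submodule.mem_inf]
  refine and_congr_right fun hf => ?_
  simp only [Submodule.restrictScalars_mem, Submodule.mem_iInf, LinearMap.mem_ker,
    LinearMap.comp_apply, evs, funext_iff, LinearMap.pi_apply, ev_toPair, Pi.zero_apply,
    Prod.mk_eq_zero]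
  exact forall_congr' fun i => mem_curvilinear_iff (q i) f j hf

end Own

/-- For every `r ≥ 1` there exist `r` pairwise disjoint (skew) lines in `ℙ³` with
ideals `Pᵢ` and a linear form `L ∉ Pᵢ` such that the saturated ideal
`J = ⋂ᵢ (Pᵢ + (L²))` of `Z₂ = C ∩ H²` satisfies
`dim_K [R/J]_j = min {2r, (j+1)²}` for all `j ≥ 0`, i.e. `Z₂` is in generic
position on the double plane `H²`. -/
theorem stmt_6 {K : Type} [Field K] [IsAlgClosed K] [CharZero K]
    (r : ℕ) (hr : 1 ≤ r) :
    ∃ (l l' : Fin r → Rp K) (L : Rp K),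
      (∀ i, l i ∈ homogeneousSubmodule (Fin 4) K 1) ∧
      (∀ i, l' i ∈ homogeneousSubmodule (Fin 4) K 1) ∧
      (∀ i, LinearIndependent K ![l i, l' i]) ∧
      -- pairwise skew: the four linear forms of two distinct lines span `[R]₁`
      (∀ i j, i ≠ j →
        Submodule.span K {l i, l' i, l j, l' j} = homogeneousSubmodule (Fin 4) K 1) ∧
      L ∈ homogeneousSubmodule (Fin 4) K 1 ∧ L ≠ 0 ∧
      (∀ i, L ∉ Ideal.span {l i, l' i}) ∧
      (∀ j : ℕ,
        finrank K ↥(homogeneousSubmodule (Fin 4) K j) -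
          finrank K ↥(homogeneousSubmodule (Fin 4) K j ⊓
            Submodule.restrictScalars K
              ((⨅ i, (Ideal.span {l i, l' i} ⊔ Ideal.span {L ^ 2}) : Ideal (Rp K)))) =
        min (2 * r) ((j + 1) ^ 2)) := by
  obtain ⟨q, hq, hd⟩ := finrank_map_evs (K := K) r
  refine ⟨fun i => line (q i), fun i => line' (q i), X 3, fun i => line_mem _,
    fun i => line'_mem _, fun i => linearIndependent_line _,
    fun i j hij => span_lines_of_skew _ _ (hq i j hij), isHomogeneous_X K 3, X_ne_zero 3,
    fun i => X_three_notMem _, fun j => ?_⟩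
  have hfin : FiniteDimensional K (homogeneousSubmodule (Fin 4) K j) :=
    Module.Finite.iff_fg.2 (homogeneousSubmodule_fg (Fin 4) K j)
  have h := finrank_map_add_finrank_inf_ker (evs q ∘ₗ toPair) (homogeneousSubmodule (Fin 4) K j)
  rw [Submodule.map_comp, map_toPair, hd j] at h
  rw [inf_eq_inf_ker, ← h, Nat.add_sub_cancel]
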